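/- Let A₅ ⊂ S₅ act on homogeneous cubic forms in ℂ[x₀, x₁, x₂, x₃] through the pentahedral action, where a permutation σ of the five linear forms ℓ₀ = x₀, ℓ₁ = x₁, ℓ₂ = x₂, ℓ₃ = x₃, ℓ₄ = −(x₀ + x₁ + x₂ + x₃) acts by the corresponding linear substitution of variables. Then the subspace of degree-3 forms invariant under every even permutation is one-dimensional, spanned by f₀ = x₀³ + x₁³ + x₂³ + x₃³ − (x₀ + x₁ + x₂ + x₃)³. -/

import Mathlib

open MvPolynomial

noncomputable section

/-- The five linear forms of the pentahedron: `ℓ₀ = x₀, ℓ₁ = x₁, ℓ₂ = x₂, ℓ₃ = x₃,`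
`ℓ₄ = -(x₀ + x₁ + x₂ + x₃)`; they satisfy `ℓ₀ + ℓ₁ + ℓ₂ + ℓ₃ + ℓ₄ = 0`. -/
def pentForm : Fin 5 → MvPolynomial (Fin 4) ℂ :=
  ![X 0, X 1, X 2, X 3, -(X 0 + X 1 + X 2 + X 3)]

/-- The pentahedral action of a permutation `σ ∈ S₅` on polynomials in `x₀, …, x₃`:
the linear substitution of the variables sending `ℓᵢ` to `ℓ_{σ(i)}` for all `i`. -/
def pentAct (σ : Equiv.Perm (Fin 5)) :
    MvPolynomial (Fin 4) ℂ →ₐ[ℂ] MvPolynomial (Fin 4) ℂ :=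
  aeval fun i : Fin 4 => pentForm (σ i.castSucc)

/-- `f₀ = x₀³ + x₁³ + x₂³ + x₃³ - (x₀ + x₁ + x₂ + x₃)³`, the Clebsch cubic. -/
def clebsch : MvPolynomial (Fin 4) ℂ :=
  X 0 ^ 3 + X 1 ^ 3 + X 2 ^ 3 + X 3 ^ 3 - (X 0 + X 1 + X 2 + X 3) ^ 3

/-!
Let a finite group `G` permute linear forms `ℓᵢ` with `∑ ℓᵢ = 0`. Averaging over `G` maps
`ℓᵢ ℓⱼ ℓₖ` to a multiple of `S i j k = ∑ g, ℓ_{gi} ℓ_{gj} ℓ_{gk}`, so an invariant cubic is a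
combination of the `S i j k`. If `G` is 3-transitive, `S i j k` depends only on which of the three
indices coincide, which leaves three values. The values `S i i i` add up to `|G| ∑ ℓᵢ³`, and
summing `S i i k` or `S i j k` over `k` gives zero because `∑ ℓᵢ = 0`; this expresses all three
values through `∑ ℓᵢ³`.
-/

theorem exists_smul_eq_of_is_three_pretransitive {G ι : Type*} [Group G] [MulAction G ι]
    [MulAction.IsMultiplyPretransitive G ι 3] {a b c a' b' c' : ι}
    (hab : a ≠ b) (hac : a ≠ c) (hbc : b ≠ c) (hab' : a' ≠ b') (hac' : a' ≠ c') (hbc' : b' ≠ c') :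
    ∃ g : G, g • a = a' ∧ g • b = b' ∧ g • c = c' := by
  have injective_triple : ∀ {x y z : ι}, x ≠ y → x ≠ z → y ≠ z →
      Function.Injective ![x, y, z] := by
    intro x y z hxy hxz hyz p q h
    fin_cases p <;> fin_cases q <;> simp_all
  obtain ⟨g, hg⟩ := MulAction.exists_smul_eq G
    (⟨![a, b, c], injective_triple hab hac hbc⟩ : Fin 3 ↪ ι)
    ⟨![a', b', c'], injective_triple hab' hac' hbc'⟩
  exact ⟨g, DFunLike.congr_fun hg 0, DFunLike.congr_fun hg 1, DFunLike.congr_fun hg 2⟩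

section TripleOrbitSum

variable (G : Type*) {ι A : Type*} [Group G] [Fintype G] [MulAction G ι] [CommRing A]

/-- The sum `∑ g, ℓ (g i) ℓ (g j) ℓ (g k)` over the group `G`, that is, the unnormalised average
of the product `ℓ i * ℓ j * ℓ k` when `G` permutes the family `ℓ`. -/
def tripleOrbitSum (ℓ : ι → A) (i j k : ι) : A :=
  ∑ g : G, ℓ (g • i) * ℓ (g • j) * ℓ (g • k)

variable (ℓ : ι → A)

theorem tripleOrbitSum_smul (g : G) (i j k : ι) :
    tripleOrbitSum G ℓ (g • i) (g • j) (g • k) = tripleOrbitSum G ℓ i j k := by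
  simp only [tripleOrbitSum, smul_smul]
  exact Equiv.sum_comp (Equiv.mulRight g) fun h => ℓ (h • i) * ℓ (h • j) * ℓ (h • k)

theorem tripleOrbitSum_rotate (i j k : ι) :
    tripleOrbitSum G ℓ i j k = tripleOrbitSum G ℓ j k i :=
  Finset.sum_congr rfl fun _ _ => by ring

theorem tripleOrbitSum_diag_eq [MulAction.IsPretransitive G ι] (i j : ι) :
    tripleOrbitSum G ℓ i i i = tripleOrbitSum G ℓ j j j := by
  obtain ⟨g, rfl⟩ := MulAction.exists_smul_eq G j i
  exact tripleOrbitSum_smul G ℓ g j j j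

theorem tripleOrbitSum_pair_eq [MulAction.IsMultiplyPretransitive G ι 2]
    {i j i' j' : ι} (hij : i ≠ j) (hij' : i' ≠ j') :
    tripleOrbitSum G ℓ i i j = tripleOrbitSum G ℓ i' i' j' := by
  obtain ⟨g, rfl, rfl⟩ := MulAction.is_two_pretransitive_iff.mp ‹_› hij' hij
  exact tripleOrbitSum_smul G ℓ g i' i' j'

theorem tripleOrbitSum_distinct_eq [MulAction.IsMultiplyPretransitive G ι 3]
    {i j k i' j' k' : ι} (hij : i ≠ j) (hik : i ≠ k) (hjk : j ≠ k)
    (hij' : i' ≠ j') (hik' : i' ≠ k') (hjk' : j' ≠ k') :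
    tripleOrbitSum G ℓ i j k = tripleOrbitSum G ℓ i' j' k' := by
  obtain ⟨g, rfl, rfl, rfl⟩ :=
    exists_smul_eq_of_is_three_pretransitive (G := G) hij' hik' hjk' hij hik hjk
  exact tripleOrbitSum_smul G ℓ g i' j' k'

variable [Fintype ι]

theorem sum_tripleOrbitSum_diag :
    ∑ i, tripleOrbitSum G ℓ i i i = Fintype.card G • ∑ i, ℓ i ^ 3 := by
  simp only [tripleOrbitSum]
  rw [Finset.sum_comm, ← Finset.card_univ, ← Finset.sum_const]
  refine Finset.sum_congr rfl fun g _ => ?_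
  rw [← Equiv.sum_comp (MulAction.toPerm g) fun i => ℓ i ^ 3]
  exact Finset.sum_congr rfl fun i _ => by rw [MulAction.toPerm_apply]; ring

theorem card_smul_tripleOrbitSum_diag [MulAction.IsPretransitive G ι] (i : ι) :
    Fintype.card ι • tripleOrbitSum G ℓ i i i = Fintype.card G • ∑ j, ℓ j ^ 3 := by
  rw [← sum_tripleOrbitSum_diag, ← Finset.card_univ, ← Finset.sum_const]
  exact Finset.sum_congr rfl fun j _ => tripleOrbitSum_diag_eq G ℓ i j

variable {ℓ}

theorem sum_tripleOrbitSum_eq_zero (hℓ : ∑ i, ℓ i = 0) (i j : ι) :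
    ∑ k, tripleOrbitSum G ℓ i j k = 0 := by
  simp only [tripleOrbitSum]
  rw [Finset.sum_comm]
  refine Finset.sum_eq_zero fun g _ => ?_
  calc ∑ k, ℓ (g • i) * ℓ (g • j) * ℓ (g • k)
      = ℓ (g • i) * ℓ (g • j) * ∑ k, ℓ (MulAction.toPerm g k) := by
        simp only [Finset.mul_sum, MulAction.toPerm_apply]
    _ = 0 := by rw [Equiv.sum_comp, hℓ, mul_zero]

variable [DecidableEq ι]

theorem card_smul_tripleOrbitSum_pair [MulAction.IsMultiplyPretransitive G ι 2]
    (hℓ : ∑ i, ℓ i = 0) {i j : ι} (hij : i ≠ j) :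
    ({i}ᶜ : Finset ι).card • tripleOrbitSum G ℓ i i j = -tripleOrbitSum G ℓ i i i := by
  have sum_compl : ∑ k ∈ {i}ᶜ, tripleOrbitSum G ℓ i i k =
      ({i}ᶜ : Finset ι).card • tripleOrbitSum G ℓ i i j :=
    Finset.sum_eq_card_nsmul fun k hk =>
      tripleOrbitSum_pair_eq G ℓ (by simpa [eq_comm] using hk) hij
  rw [← sum_compl, eq_neg_iff_add_eq_zero, ← sum_tripleOrbitSum_eq_zero G hℓ i i,
    ← Finset.sum_compl_add_sum {i}, Finset.sum_singleton]

theorem card_smul_tripleOrbitSum_distinct [MulAction.IsMultiplyPretransitive G ι 3]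
    (hℓ : ∑ i, ℓ i = 0) {i j k : ι} (hij : i ≠ j) (hik : i ≠ k) (hjk : j ≠ k) :
    ({i, j}ᶜ : Finset ι).card • tripleOrbitSum G ℓ i j k =
      -(tripleOrbitSum G ℓ i i j + tripleOrbitSum G ℓ j j i) := by
  have sum_compl : ∑ m ∈ {i, j}ᶜ, tripleOrbitSum G ℓ i j m =
      ({i, j}ᶜ : Finset ι).card • tripleOrbitSum G ℓ i j k := by
    refine Finset.sum_eq_card_nsmul fun m hm => ?_
    obtain ⟨hmi, hmj⟩ : m ≠ i ∧ m ≠ j := by simpa using hm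
    exact tripleOrbitSum_distinct_eq G ℓ hij hmi.symm hmj.symm hij hik hjk
  rw [← sum_compl, eq_neg_iff_add_eq_zero, ← sum_tripleOrbitSum_eq_zero G hℓ i j,
    ← Finset.sum_compl_add_sum {i, j}, Finset.sum_pair hij, tripleOrbitSum_rotate G ℓ i i j,
    tripleOrbitSum_rotate G ℓ i j i, tripleOrbitSum_rotate G ℓ j i i,
    tripleOrbitSum_rotate G ℓ i j j]

end TripleOrbitSum

section SpanPowerSum

open Submodule

theorem mem_of_nsmul_mem {K V : Type*} [DivisionRing K] [CharZero K] [AddCommGroup V] [Module K V]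
    {W : Submodule K V} {m : ℕ} (hm : m ≠ 0) {v : V} (hv : m • v ∈ W) : v ∈ W := by
  rw [← Nat.cast_smul_eq_nsmul K] at hv
  exact (W.smul_mem_iff (Nat.cast_ne_zero.mpr hm)).mp hv

variable (K G : Type*) {ι A : Type*} [Field K] [CharZero K] [Group G] [Fintype G]
  [MulAction G ι] [Fintype ι] [CommRing A] [Algebra K A]

theorem tripleOrbitSum_diag_mem_span [MulAction.IsPretransitive G ι] (ℓ : ι → A) (i : ι) :
    tripleOrbitSum G ℓ i i i ∈ span K {∑ j, ℓ j ^ 3} := by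
  have : Nonempty ι := ⟨i⟩
  refine mem_of_nsmul_mem (Fintype.card_ne_zero (α := ι)) ?_
  rw [card_smul_tripleOrbitSum_diag]
  exact nsmul_mem (mem_span_singleton_self _) _

variable {ℓ : ι → A}

theorem tripleOrbitSum_pair_mem_span [MulAction.IsMultiplyPretransitive G ι 2]
    (hℓ : ∑ i, ℓ i = 0) (i j : ι) :
    tripleOrbitSum G ℓ i i j ∈ span K {∑ k, ℓ k ^ 3} := by
  classical
  have : MulAction.IsPretransitive G ι := MulAction.isPretransitive_of_is_two_pretransitive
  obtain rfl | hij := eq_or_ne i j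
  · exact tripleOrbitSum_diag_mem_span K G ℓ i
  have card_ne_zero : ({i}ᶜ : Finset ι).card ≠ 0 :=
    Finset.card_ne_zero_of_mem (a := j) (by simpa using hij.symm)
  refine mem_of_nsmul_mem card_ne_zero ?_
  rw [card_smul_tripleOrbitSum_pair G hℓ hij]
  exact neg_mem (tripleOrbitSum_diag_mem_span K G ℓ i)

theorem tripleOrbitSum_mem_span [MulAction.IsMultiplyPretransitive G ι 2]
    [MulAction.IsMultiplyPretransitive G ι 3] (hℓ : ∑ i, ℓ i = 0) (i j k : ι) :
    tripleOrbitSum G ℓ i j k ∈ span K {∑ m, ℓ m ^ 3} := by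
  classical
  obtain rfl | hij := eq_or_ne i j
  · exact tripleOrbitSum_pair_mem_span K G hℓ i k
  obtain rfl | hik := eq_or_ne i k
  · rw [← tripleOrbitSum_rotate]
    exact tripleOrbitSum_pair_mem_span K G hℓ i j
  obtain rfl | hjk := eq_or_ne j k
  · rw [tripleOrbitSum_rotate]
    exact tripleOrbitSum_pair_mem_span K G hℓ j i
  have card_ne_zero : ({i, j}ᶜ : Finset ι).card ≠ 0 :=
    Finset.card_ne_zero_of_mem (a := k) (by simp [hik.symm, hjk.symm])
  refine mem_of_nsmul_mem card_ne_zero ?_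
  rw [card_smul_tripleOrbitSum_distinct G hℓ hij hik hjk]
  exact neg_mem (add_mem (tripleOrbitSum_pair_mem_span K G hℓ i j)
    (tripleOrbitSum_pair_mem_span K G hℓ j i))

end SpanPowerSum

open scoped Pointwise in
theorem homogeneousSubmodule_eq_span_range_prod_X (σ R : Type*) [CommSemiring R] (n : ℕ) :
    homogeneousSubmodule σ R n =
      Submodule.span R (Set.range fun i : Fin n → σ => ∏ k, (X (i k) : MvPolynomial σ R)) := by
  rw [← homogeneousSubmodule_one_pow, homogeneousSubmodule_one_eq_span_X, Submodule.span_pow]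
  congr 1
  ext f
  refine Set.mem_pow.trans ⟨?_, ?_⟩
  · rintro ⟨factor, rfl⟩
    choose i hi using fun k => (factor k).2
    exact ⟨i, by simp only [hi, List.prod_ofFn]⟩
  · rintro ⟨i, rfl⟩
    exact ⟨fun k => ⟨X (i k), i k, rfl⟩, List.prod_ofFn⟩

section SimplexForm

variable (K : Type*) [CommRing K] (n : ℕ)

/-- The `n + 1` linear forms `x₀, …, x_{n-1}, -(x₀ + ⋯ + x_{n-1})`, which add up to zero. For
`n = 4` these are the forms `pentForm` of the pentahedron. -/
def simplexForm : Fin (n + 1) → MvPolynomial (Fin n) K :=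
  Fin.snoc X (-∑ i, X i)

/-- The sum of the cubes of the forms `simplexForm`, which for `n = 4` is the Clebsch cubic. -/
def simplexCubic : MvPolynomial (Fin n) K :=
  ∑ i, simplexForm K n i ^ 3

variable {n}

/-- The linear substitution of the variables sending the `i`-th form of `simplexForm` to the
`σ i`-th one, which for `n = 4` is the pentahedral action `pentAct`. -/
def simplexAct (σ : Equiv.Perm (Fin (n + 1))) :
    MvPolynomial (Fin n) K →ₐ[K] MvPolynomial (Fin n) K :=
  aeval fun i : Fin n => simplexForm K n (σ i.castSucc)

@[simp]
theorem simplexForm_castSucc (i : Fin n) : simplexForm K n i.castSucc = X i :=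
  Fin.snoc_castSucc (α := fun _ => MvPolynomial (Fin n) K) ..

@[simp]
theorem simplexForm_last : simplexForm K n (Fin.last n) = -∑ i, X i :=
  Fin.snoc_last (α := fun _ => MvPolynomial (Fin n) K) ..

variable (n) in
theorem sum_simplexForm : ∑ i, simplexForm K n i = 0 := by
  simp [Fin.sum_univ_castSucc]

theorem isHomogeneous_simplexForm (i : Fin (n + 1)) : (simplexForm K n i).IsHomogeneous 1 := by
  refine Fin.lastCases ?_ (fun j => ?_) i
  · rw [simplexForm_last]
    exact (IsHomogeneous.sum _ _ _ fun j _ => isHomogeneous_X K j).neg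
  · rw [simplexForm_castSucc]
    exact isHomogeneous_X K j

variable (n) in
theorem isHomogeneous_simplexCubic : (simplexCubic K n).IsHomogeneous 3 :=
  IsHomogeneous.sum _ _ _ fun i _ => (isHomogeneous_simplexForm K i).pow 3

theorem simplexAct_simplexForm (σ : Equiv.Perm (Fin (n + 1))) (i : Fin (n + 1)) :
    simplexAct K σ (simplexForm K n i) = simplexForm K n (σ i) := by
  have act_castSucc (j : Fin n) :
      simplexAct K σ (simplexForm K n j.castSucc) = simplexForm K n (σ j.castSucc) := by
    rw [simplexForm_castSucc, simplexAct, aeval_X]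
  refine Fin.lastCases ?_ act_castSucc i
  have sum_act : ∑ j, simplexAct K σ (simplexForm K n j) = ∑ j, simplexForm K n (σ j) := by
    rw [← map_sum, Equiv.sum_comp, sum_simplexForm, map_zero]
  simpa only [Fin.sum_univ_castSucc, act_castSucc, add_right_inj] using sum_act

theorem simplexAct_simplexCubic (σ : Equiv.Perm (Fin (n + 1))) :
    simplexAct K σ (simplexCubic K n) = simplexCubic K n := by
  simp only [simplexCubic, map_sum, map_pow, simplexAct_simplexForm]
  exact Equiv.sum_comp σ fun i => simplexForm K n i ^ 3

theorem sum_simplexAct_mul_mul (G : Subgroup (Equiv.Perm (Fin (n + 1)))) [Fintype G]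
    (i j k : Fin n) :
    ∑ σ : G, simplexAct K (σ : Equiv.Perm (Fin (n + 1))) (X i * X j * X k) =
      tripleOrbitSum G (simplexForm K n) i.castSucc j.castSucc k.castSucc := by
  simp only [← simplexForm_castSucc, map_mul, simplexAct_simplexForm, tripleOrbitSum,
    Subgroup.smul_def, Equiv.Perm.smul_def]

theorem simplexCubic_ne_zero [CharZero K] (hn : 2 ≤ n) : simplexCubic K n ≠ 0 := by
  obtain ⟨m, rfl⟩ := Nat.exists_eq_add_of_le' hn
  have eval_eq : eval (Fin.cons 1 (Fin.cons 1 0)) (simplexCubic K (m + 2)) = -6 := by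
    norm_num [simplexCubic, Fin.sum_univ_castSucc (n := m + 2), Fin.sum_univ_succ]
  intro h
  rw [h, map_zero] at eval_eq
  norm_num at eval_eq

end SimplexForm

section Invariants

variable {K : Type*} [Field K] [CharZero K] {n : ℕ} {G : Subgroup (Equiv.Perm (Fin (n + 1)))}

theorem sum_simplexAct_mem_span [Fintype G] [MulAction.IsMultiplyPretransitive G (Fin (n + 1)) 2]
    [MulAction.IsMultiplyPretransitive G (Fin (n + 1)) 3] {f : MvPolynomial (Fin n) K}
    (hf : f.IsHomogeneous 3) :
    ∑ σ : G, simplexAct K (σ : Equiv.Perm (Fin (n + 1))) f ∈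
      Submodule.span K {simplexCubic K n} := by
  rw [← mem_homogeneousSubmodule, homogeneousSubmodule_eq_span_range_prod_X] at hf
  induction hf using Submodule.span_induction with
  | mem f hf =>
    obtain ⟨i, rfl⟩ := hf
    simp only [Fin.prod_univ_three, sum_simplexAct_mul_mul]
    exact tripleOrbitSum_mem_span K G (sum_simplexForm K n) _ _ _
  | zero => simp only [map_zero, Finset.sum_const_zero, Submodule.zero_mem]
  | add f g _ _ hf hg =>
    simp only [map_add, Finset.sum_add_distrib]
    exact Submodule.add_mem _ hf hg
  | smul c f _ hf =>
    simp only [map_smul, ← Finset.smul_sum]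
    exact Submodule.smul_mem _ c hf

theorem mem_span_simplexCubic_of_invariant
    [MulAction.IsMultiplyPretransitive G (Fin (n + 1)) 2]
    [MulAction.IsMultiplyPretransitive G (Fin (n + 1)) 3] {f : MvPolynomial (Fin n) K}
    (hf : f.IsHomogeneous 3) (hinv : ∀ σ ∈ G, simplexAct K σ f = f) :
    f ∈ Submodule.span K {simplexCubic K n} := by
  have := Fintype.ofFinite G
  have sum_eq : ∑ σ : G, simplexAct K (σ : Equiv.Perm (Fin (n + 1))) f = Fintype.card G • f :=
    Finset.sum_eq_card_nsmul fun σ _ => hinv σ σ.2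
  refine mem_of_nsmul_mem (Fintype.card_ne_zero (α := G)) ?_
  rw [← sum_eq]
  exact sum_simplexAct_mem_span hf

end Invariants

theorem A5_invariant_cubics_eq_span_clebsch_general {K : Type*} [Field K] [CharZero K]
    {n : ℕ} (hn : 2 ≤ n) (G : Subgroup (Equiv.Perm (Fin (n + 1))))
    [MulAction.IsMultiplyPretransitive G (Fin (n + 1)) 3] :
    simplexCubic K n ≠ 0 ∧
    {f : MvPolynomial (Fin n) K | f.IsHomogeneous 3 ∧ ∀ σ ∈ G, simplexAct K σ f = f} =
      Set.range fun c : K => c • simplexCubic K n := by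
  have : MulAction.IsMultiplyPretransitive G (Fin (n + 1)) 2 :=
    MulAction.isMultiplyPretransitive_of_le (n := 3) (by norm_num) (by simpa using hn)
  refine ⟨simplexCubic_ne_zero K hn, Set.Subset.antisymm ?_ ?_⟩
  · rintro f ⟨hf, hinv⟩
    exact Submodule.mem_span_singleton.mp (mem_span_simplexCubic_of_invariant hf hinv)
  · rintro _ ⟨c, rfl⟩
    refine ⟨Submodule.smul_mem (homogeneousSubmodule (Fin n) K 3) c
      (isHomogeneous_simplexCubic K n), fun σ _ => ?_⟩
    rw [map_smul, simplexAct_simplexCubic]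

theorem alternatingGroup_fin_five_is_three_pretransitive :
    MulAction.IsMultiplyPretransitive (alternatingGroup (Fin 5)) (Fin 5) 3 := by
  simpa only [Nat.card_eq_fintype_card, Fintype.card_fin] using
    alternatingGroup.isMultiplyPretransitive (Fin 5)

theorem pentForm_eq_simplexForm : pentForm = simplexForm ℂ 4 := by
  funext i
  refine Fin.lastCases ?_ (fun j => ?_) i
  · rw [simplexForm_last, Fin.sum_univ_four]
    rfl
  · rw [simplexForm_castSucc]
    fin_cases j <;> rfl

theorem pentAct_eq_simplexAct : pentAct = simplexAct ℂ (n := 4) := by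
  funext σ
  rw [pentAct, simplexAct, pentForm_eq_simplexForm]

theorem clebsch_eq_simplexCubic : clebsch = simplexCubic ℂ 4 := by
  simp only [clebsch, simplexCubic, Fin.sum_univ_castSucc (n := 4), Fin.sum_univ_four,
    simplexForm_castSucc, simplexForm_last]
  ring

/-- The space of cubic forms invariant under the pentahedral action of every even
permutation in `S₅` is one-dimensional, spanned by the Clebsch cubic `f₀`. -/
theorem A5_invariant_cubics_eq_span_clebsch :
    clebsch ≠ 0 ∧
    {f : MvPolynomial (Fin 4) ℂ | f.IsHomogeneous 3 ∧
        ∀ σ ∈ alternatingGroup (Fin 5), pentAct σ f = f} =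
      Set.range fun c : ℂ => c • clebsch := by
  have := alternatingGroup_fin_five_is_three_pretransitive
  rw [clebsch_eq_simplexCubic, pentAct_eq_simplexAct]
  exact A5_invariant_cubics_eq_span_clebsch_general (by norm_num) (alternatingGroup (Fin 5))
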